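/- Let (f_n)_{n∈ℕ} be a metric p-frame for the Banach space X with bounds a, b such that f_n(0) = 0 for all n, and let (τ_n)_{n∈ℕ} be a q-Bessel sequence in X with bound c. Then the following are equivalent: (i) x = ∑_{n=1}^∞ f_n(x)·τ_n for every x ∈ X (convergence in X); (ii) for every f ∈ X*, sup_{x≠y} |f(x) − f(y) − ∑_{k=1}^n f(τ_k)·(f_k(x) − f_k(y))| / ‖x−y‖ → 0 as n → ∞. Moreover, if (i) holds, then (τ_n) is a q-frame for X*: ‖f‖ ≤ b·(∑_{n=1}^∞ |f(τ_n)|^q)^{1/q} ≤ b·c·‖f‖ for every f ∈ X*. -/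

import Mathlib

/-!
Everything is compared with the weak expansion `F x - F y = ∑ F(τ_k) (f_k x - f_k y)`. Hölder's
inequality bounds the error of its `n`-th partial sum by the `ℓ^q` tail of `F(τ_k)` times the `ℓ^p`
tail of `f_k x - f_k y`. The first tail tends to `0` and the second is at most `b ‖x - y‖`,
uniformly in `x` and `y`, which is the dual expansion; dually, the first tail is at most `c ‖F‖`,
uniformly in `F`, and the second tends to `0`, which is norm convergence of the reconstruction
series. The lower `q`-frame bound is the case `n = 0`.
-/

open Filter Topology

section LpTail

variable {E : Type*} [SeminormedAddCommGroup E] {r : ℝ} {u : ℕ → E}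

/-- The `ℓ^r` norm of the tail `(u n, u (n + 1), …)` of a sequence `u`. It is meant for sequences
with `∑ ‖u k‖ ^ r` finite, and the value at `n = 0` is then the `ℓ^r` norm of `u`. -/
noncomputable def lpTail (r : ℝ) (u : ℕ → E) (n : ℕ) : ℝ :=
  (∑' k, ‖u (k + n)‖ ^ r) ^ (1 / r)

theorem lpTail_zero (r : ℝ) (u : ℕ → E) : lpTail r u 0 = (∑' k, ‖u k‖ ^ r) ^ (1 / r) := rfl

theorem lpTail_nonneg (r : ℝ) (u : ℕ → E) (n : ℕ) : 0 ≤ lpTail r u n := by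
  unfold lpTail
  positivity

theorem lpTail_le_lpTail_zero (hr : 0 < r) (hu : Summable fun k => ‖u k‖ ^ r) (n : ℕ) :
    lpTail r u n ≤ lpTail r u 0 := by
  have tsum_le : ∑' k, ‖u (k + n)‖ ^ r ≤ ∑' k, ‖u k‖ ^ r :=
    ((summable_nat_add_iff n).2 hu).tsum_le_tsum_of_inj (· + n) (add_left_injective n)
      (fun _ _ => by positivity) (fun _ => le_rfl) hu
  exact Real.rpow_le_rpow (by positivity) tsum_le (by positivity)

theorem tendsto_lpTail_atTop_zero (hr : 0 < r) (u : ℕ → E) :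
    Tendsto (lpTail r u) atTop (𝓝 0) := by
  have h := (tendsto_sum_nat_add fun k => ‖u k‖ ^ r).rpow_const (p := 1 / r)
    (Or.inr (by positivity))
  rwa [Real.zero_rpow (by positivity)] at h

theorem norm_sub_sum_range_mul_le_lpTail_mul_lpTail {A : Type*} [NonUnitalNormedRing A]
    [CompleteSpace A] {p q : ℝ} (hpq : p.HolderConjugate q) {u v : ℕ → A} {s : A}
    (hu : Summable fun k => ‖u k‖ ^ p) (hv : Summable fun k => ‖v k‖ ^ q)
    (hs : Tendsto (fun N => ∑ k ∈ Finset.range N, u k * v k) atTop (𝓝 s)) (n : ℕ) :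
    ‖s - ∑ k ∈ Finset.range n, u k * v k‖ ≤ lpTail p u n * lpTail q v n := by
  have summable_mul : Summable fun k => u k * v k :=
    .of_norm_bounded (Real.summable_mul_of_Lp_Lq_of_nonneg hpq (fun _ => norm_nonneg _)
      (fun _ => norm_nonneg _) hu hv) fun k => norm_mul_le _ _
  have hasSum_tail := (hasSum_nat_add_iff' n).2 (summable_mul.hasSum_iff_tendsto_nat.2 hs)
  obtain ⟨summable_norm_tail, holder⟩ :=
    Real.summable_and_inner_le_Lp_mul_Lq_tsum_of_nonneg hpq (fun k => norm_nonneg (u (k + n)))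
      (fun k => norm_nonneg (v (k + n))) ((summable_nat_add_iff n).2 hu)
      ((summable_nat_add_iff n).2 hv)
  exact (hasSum_tail.norm_le_of_bounded summable_norm_tail.hasSum
    fun k => norm_mul_le _ _).trans holder

end LpTail

section MetricBessel

variable {X E : Type*} [SeminormedAddCommGroup X] [SeminormedAddCommGroup E]

/-- `f` is a metric `p`-Bessel sequence with bound `b`: it satisfies the upper half of the
definition of a metric `p`-frame. -/
structure IsMetricBessel (p : ℝ) (f : ℕ → X → E) (b : ℝ) : Prop where
  bound_nonneg : 0 ≤ b
  summable : ∀ x y, Summable fun n => ‖f n x - f n y‖ ^ p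
  tsum_le : ∀ x y, (∑' n, ‖f n x - f n y‖ ^ p) ^ (1 / p) ≤ b * ‖x - y‖

theorem IsMetricBessel.lpTail_le {p b : ℝ} {f : ℕ → X → E} (hf : IsMetricBessel p f b) (hp : 0 < p)
    (x y : X) (n : ℕ) : lpTail p (fun k => f k x - f k y) n ≤ b * ‖x - y‖ :=
  (lpTail_le_lpTail_zero hp (hf.summable x y) n).trans (hf.tsum_le x y)

end MetricBessel

section NontriviallyNormedField

variable {𝕂 X : Type*} [NontriviallyNormedField 𝕂] [SeminormedAddCommGroup X] [NormedSpace 𝕂 X]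
  {p q b c : ℝ} {f : ℕ → X → 𝕂} {τ : ℕ → X}

variable (𝕂) in
/-- `τ` is a `q`-Bessel sequence with bound `c`, tested against the continuous `𝕂`-linear
functionals on `X`. -/
structure IsBessel (q : ℝ) (τ : ℕ → X) (c : ℝ) : Prop where
  bound_nonneg : 0 ≤ c
  summable : ∀ F : X →L[𝕂] 𝕂, Summable fun n => ‖F (τ n)‖ ^ q
  tsum_le : ∀ F : X →L[𝕂] 𝕂, ∑' n, ‖F (τ n)‖ ^ q ≤ c ^ q * ‖F‖ ^ q

/-- The reconstruction property `x = ∑ f_n(x) τ_n`, as convergence of the partial sums in the order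
of the indices. -/
def IsReconstruction (f : ℕ → X → 𝕂) (τ : ℕ → X) : Prop :=
  ∀ x : X, Tendsto (fun N => ∑ n ∈ Finset.range N, f n x • τ n) atTop (𝓝 x)

/-- The dual expansion `F = ∑ F(τ_k) f_k` in the Lipschitz seminorm: the Lipschitz constants of the
remainders tend to `0`. -/
def IsDualExpansion (f : ℕ → X → 𝕂) (τ : ℕ → X) : Prop :=
  ∀ F : X →L[𝕂] 𝕂, ∀ ε > (0 : ℝ), ∃ N : ℕ, ∀ n ≥ N, ∀ x y : X,
    ‖F x - F y - ∑ k ∈ Finset.range n, F (τ k) * (f k x - f k y)‖ ≤ ε * ‖x - y‖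

/-- The expansion `F x - F y = ∑ F(τ_k) (f_k(x) - f_k(y))` for each functional and each pair of
points, with no uniformity. It is the common weakening of `IsReconstruction` and
`IsDualExpansion`. -/
def IsWeakExpansion (f : ℕ → X → 𝕂) (τ : ℕ → X) : Prop :=
  ∀ (F : X →L[𝕂] 𝕂) (x y : X),
    Tendsto (fun N => ∑ k ∈ Finset.range N, F (τ k) * (f k x - f k y)) atTop (𝓝 (F x - F y))

theorem IsBessel.lpTail_le (hτ : IsBessel 𝕂 q τ c) (hq : 0 < q) (F : X →L[𝕂] 𝕂) (n : ℕ) :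
    lpTail q (fun k => F (τ k)) n ≤ c * ‖F‖ := by
  have hc := hτ.bound_nonneg
  calc lpTail q (fun k => F (τ k)) n
      ≤ (∑' k, ‖F (τ k)‖ ^ q) ^ (1 / q) := lpTail_le_lpTail_zero hq (hτ.summable F) n
    _ ≤ ((c * ‖F‖) ^ q) ^ (1 / q) := by
        rw [Real.mul_rpow hc (norm_nonneg F)]
        exact Real.rpow_le_rpow (by positivity) (hτ.tsum_le F) (by positivity)
    _ = c * ‖F‖ := by rw [one_div, Real.rpow_rpow_inv (by positivity) hq.ne']

theorem IsReconstruction.isWeakExpansion (h : IsReconstruction f τ) : IsWeakExpansion f τ := by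
  intro F x y
  refine (((F.continuous.tendsto x).comp (h x)).sub
    ((F.continuous.tendsto y).comp (h y))).congr fun N => ?_
  simp only [Function.comp_apply, map_sum, map_smul, smul_eq_mul, mul_comm (f _ _), mul_sub,
    Finset.sum_sub_distrib]

theorem IsDualExpansion.isWeakExpansion (h : IsDualExpansion f τ) : IsWeakExpansion f τ := by
  intro F x y
  rw [Metric.tendsto_atTop]
  intro ε hε
  obtain ⟨N, hN⟩ := h F (ε / (‖x - y‖ + 1)) (by positivity)
  refine ⟨N, fun n hn => ?_⟩
  rw [dist_comm, dist_eq_norm]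
  calc ‖F x - F y - ∑ k ∈ Finset.range n, F (τ k) * (f k x - f k y)‖
      ≤ ε / (‖x - y‖ + 1) * ‖x - y‖ := hN n hn x y
    _ < ε / (‖x - y‖ + 1) * (‖x - y‖ + 1) := by gcongr; exact lt_add_one _
    _ = ε := by field_simp

namespace IsWeakExpansion

variable [CompleteSpace 𝕂]

theorem norm_sub_sum_range_le (h : IsWeakExpansion f τ) (hpq : p.HolderConjugate q)
    {F : X →L[𝕂] 𝕂} {x y : X} (hF : Summable fun k => ‖F (τ k)‖ ^ q)
    (hxy : Summable fun k => ‖f k x - f k y‖ ^ p) (n : ℕ) :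
    ‖F x - F y - ∑ k ∈ Finset.range n, F (τ k) * (f k x - f k y)‖ ≤
      lpTail q (fun k => F (τ k)) n * lpTail p (fun k => f k x - f k y) n :=
  norm_sub_sum_range_mul_le_lpTail_mul_lpTail hpq.symm hF hxy (h F x y) n

theorem isDualExpansion (h : IsWeakExpansion f τ) (hpq : p.HolderConjugate q)
    (hf : IsMetricBessel p f b) (hτ : ∀ F : X →L[𝕂] 𝕂, Summable fun k => ‖F (τ k)‖ ^ q) :
    IsDualExpansion f τ := by
  intro F ε hε
  have tendsto_zero : Tendsto (fun n => lpTail q (fun k => F (τ k)) n * b) atTop (𝓝 0) := by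
    simpa only [zero_mul] using
      (tendsto_lpTail_atTop_zero hpq.symm.pos fun k => F (τ k)).mul_const b
  obtain ⟨N, hN⟩ := eventually_atTop.1 (tendsto_zero.eventually_le_const hε)
  refine ⟨N, fun n hn x y => ?_⟩
  calc ‖F x - F y - ∑ k ∈ Finset.range n, F (τ k) * (f k x - f k y)‖
      ≤ lpTail q (fun k => F (τ k)) n * lpTail p (fun k => f k x - f k y) n :=
        h.norm_sub_sum_range_le hpq (hτ F) (hf.summable x y) n
    _ ≤ lpTail q (fun k => F (τ k)) n * (b * ‖x - y‖) :=
        mul_le_mul_of_nonneg_left (hf.lpTail_le hpq.pos x y n) (lpTail_nonneg _ _ n)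
    _ = lpTail q (fun k => F (τ k)) n * b * ‖x - y‖ := (mul_assoc _ _ _).symm
    _ ≤ ε * ‖x - y‖ := mul_le_mul_of_nonneg_right (hN n hn) (norm_nonneg _)

theorem opNorm_le (h : IsWeakExpansion f τ) (hpq : p.HolderConjugate q)
    (hf : IsMetricBessel p f b) {F : X →L[𝕂] 𝕂} (hF : Summable fun k => ‖F (τ k)‖ ^ q) :
    ‖F‖ ≤ b * lpTail q (fun k => F (τ k)) 0 := by
  have tail_nonneg := lpTail_nonneg q (fun k => F (τ k)) 0
  refine F.opNorm_le_bound (mul_nonneg hf.bound_nonneg tail_nonneg) fun x => ?_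
  calc ‖F x‖
      ≤ lpTail q (fun k => F (τ k)) 0 * lpTail p (fun k => f k x - f k 0) 0 := by
        simpa only [map_zero, sub_zero, Finset.range_zero, Finset.sum_empty] using
          h.norm_sub_sum_range_le hpq hF (hf.summable x 0) 0
    _ ≤ lpTail q (fun k => F (τ k)) 0 * (b * ‖x‖) := by
        simpa only [sub_zero] using
          mul_le_mul_of_nonneg_left (hf.lpTail_le hpq.pos x 0 0) tail_nonneg
    _ = b * lpTail q (fun k => F (τ k)) 0 * ‖x‖ := by ring

end IsWeakExpansion

end NontriviallyNormedField

section RCLike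

variable {𝕂 X : Type*} [RCLike 𝕂] [SeminormedAddCommGroup X] [NormedSpace 𝕂 X]
  {p q b c : ℝ} {f : ℕ → X → 𝕂} {τ : ℕ → X}

theorem IsWeakExpansion.norm_sub_sum_range_smul_le (h : IsWeakExpansion f τ)
    (hpq : p.HolderConjugate q) (hf0 : ∀ n, f n 0 = 0) (hτ : IsBessel 𝕂 q τ c) {x : X}
    (hx : Summable fun k => ‖f k x‖ ^ p) (n : ℕ) :
    ‖x - ∑ k ∈ Finset.range n, f k x • τ k‖ ≤ c * lpTail p (fun k => f k x) n := by
  have hx0 : Summable fun k => ‖f k x - f k 0‖ ^ p := by simpa only [hf0, sub_zero] using hx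
  have tail_nonneg := lpTail_nonneg p (fun k => f k x) n
  refine NormedSpace.norm_le_dual_bound 𝕂 _ (mul_nonneg hτ.bound_nonneg tail_nonneg) fun F => ?_
  calc ‖F (x - ∑ k ∈ Finset.range n, f k x • τ k)‖
      = ‖F x - ∑ k ∈ Finset.range n, F (τ k) * f k x‖ := by simp [mul_comm]
    _ ≤ lpTail q (fun k => F (τ k)) n * lpTail p (fun k => f k x) n := by
        simpa only [hf0, map_zero, sub_zero] using h.norm_sub_sum_range_le hpq (hτ.summable F) hx0 n
    _ ≤ c * ‖F‖ * lpTail p (fun k => f k x) n :=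
        mul_le_mul_of_nonneg_right (hτ.lpTail_le hpq.symm.pos F n) tail_nonneg
    _ = c * lpTail p (fun k => f k x) n * ‖F‖ := mul_right_comm _ _ _

theorem IsWeakExpansion.isReconstruction (h : IsWeakExpansion f τ) (hpq : p.HolderConjugate q)
    (hf : ∀ x, Summable fun k => ‖f k x‖ ^ p) (hf0 : ∀ n, f n 0 = 0) (hτ : IsBessel 𝕂 q τ c) :
    IsReconstruction f τ := by
  intro x
  have tendsto_zero : Tendsto (fun n => c * lpTail p (fun k => f k x) n) atTop (𝓝 0) := by
    simpa only [mul_zero] using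
      (tendsto_lpTail_atTop_zero hpq.pos fun k => f k x).const_mul c
  rw [tendsto_iff_norm_sub_tendsto_zero]
  refine squeeze_zero (fun _ => norm_nonneg _) (fun n => ?_) tendsto_zero
  rw [norm_sub_rev]
  exact h.norm_sub_sum_range_smul_le hpq hf0 hτ (hf x) n

theorem metric_pFrame_reconstruction_iff_dual_expansion_general (hpq : p.HolderConjugate q)
    (hf : IsMetricBessel p f b) (hf0 : ∀ n, f n 0 = 0) (hτ : IsBessel 𝕂 q τ c) :
    (IsReconstruction f τ ↔ IsDualExpansion f τ) ∧
    (IsReconstruction f τ → ∀ F : X →L[𝕂] 𝕂,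
      ‖F‖ ≤ b * (∑' n, ‖F (τ n)‖ ^ q) ^ (1 / q) ∧
      b * (∑' n, ‖F (τ n)‖ ^ q) ^ (1 / q) ≤ b * c * ‖F‖) := by
  have summable_apply (x : X) : Summable fun k => ‖f k x‖ ^ p := by
    simpa only [hf0, sub_zero] using hf.summable x 0
  refine ⟨⟨fun h => h.isWeakExpansion.isDualExpansion hpq hf hτ.summable,
    fun h => h.isWeakExpansion.isReconstruction hpq summable_apply hf0 hτ⟩, fun h F => ?_⟩
  rw [← lpTail_zero q fun n => F (τ n), mul_assoc]
  exact ⟨h.isWeakExpansion.opNorm_le hpq hf (hτ.summable F),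
    mul_le_mul_of_nonneg_left (hτ.lpTail_le hpq.symm.pos F 0) hf.bound_nonneg⟩

end RCLike

/-- Let `(f_n)` be a metric p-frame (of Lipschitz functionals vanishing at `0`) for the Banach
space `X` with bounds `a, b`, and `(τ_n)` a q-Bessel sequence in `X` with bound `c`.  Then the
reconstruction property `x = ∑ f_n(x) τ_n` holds iff for every `F ∈ X*` the Lipschitz norms of
the tails `F - ∑_{k<n} F(τ_k)(f_k ⬝ - f_k ⬝)` tend to `0`; moreover, if reconstruction holds
then `(τ_n)` is a q-frame for `X*`:
`‖F‖ ≤ b (∑ |F τ_n|^q)^{1/q} ≤ b c ‖F‖` for all `F ∈ X*`. -/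
theorem metric_pFrame_reconstruction_iff_dual_expansion
    {𝕂 X : Type*} [RCLike 𝕂] [NormedAddCommGroup X] [NormedSpace 𝕂 X] [CompleteSpace X]
    (p q : ℝ) (hp : 1 < p) (hpq : 1 / p + 1 / q = 1)
    (f : ℕ → X → 𝕂) (a b : ℝ) (ha : 0 < a) (hb : 0 < b)
    (hlip : ∀ n, ∃ K, LipschitzWith K (f n)) (hf0 : ∀ n, f n 0 = 0)
    (hsum : ∀ x y : X, Summable fun n => ‖f n x - f n y‖ ^ p)
    (hlow : ∀ x y : X, a * ‖x - y‖ ≤ (∑' n, ‖f n x - f n y‖ ^ p) ^ (1 / p))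
    (hup : ∀ x y : X, (∑' n, ‖f n x - f n y‖ ^ p) ^ (1 / p) ≤ b * ‖x - y‖)
    (τ : ℕ → X) (c : ℝ) (hc : 0 < c)
    (hbessel : ∀ F : X →L[𝕂] 𝕂, Summable (fun n => ‖F (τ n)‖ ^ q) ∧
      ∑' n, ‖F (τ n)‖ ^ q ≤ c ^ q * ‖F‖ ^ q) :
    ((∀ x : X, Filter.Tendsto (fun N => ∑ n ∈ Finset.range N, f n x • τ n)
        Filter.atTop (nhds x)) ↔
      (∀ F : X →L[𝕂] 𝕂, ∀ ε > (0 : ℝ), ∃ N : ℕ, ∀ n ≥ N, ∀ x y : X,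
        ‖F x - F y - ∑ k ∈ Finset.range n, F (τ k) * (f k x - f k y)‖ ≤ ε * ‖x - y‖)) ∧
    ((∀ x : X, Filter.Tendsto (fun N => ∑ n ∈ Finset.range N, f n x • τ n)
        Filter.atTop (nhds x)) →
      ∀ F : X →L[𝕂] 𝕂,
        ‖F‖ ≤ b * (∑' n, ‖F (τ n)‖ ^ q) ^ (1 / q) ∧
        b * (∑' n, ‖F (τ n)‖ ^ q) ^ (1 / q) ≤ b * c * ‖F‖) :=
  metric_pFrame_reconstruction_iff_dual_expansion_general
    (Real.holderConjugate_iff.2 ⟨hp, by simpa only [one_div] using hpq⟩) ⟨hb.le, hsum, hup⟩ hf0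
    ⟨hc.le, fun F => (hbessel F).1, fun F => (hbessel F).2⟩
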